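/- For every θ ∈ (0, π/2), the derivative of g at θ equals sin(θ/2) − 1/(4·sin(θ/2)²); in particular, for θ ∈ (0, π/2) this derivative vanishes if and only if sin(θ/2)³ = 1/4. Consequently, setting θ* = 2·arcsin((1/4)^(1/3)) (so θ* ∈ (0, π/2)), g is strictly decreasing on the interval (0, θ*] and strictly increasing on the interval [θ*, π/2), so g attains its minimum over (0, π/2) at θ*. -/

import Mathlib

open Real

noncomputable def g (θ : ℝ) : ℝ :=
  Real.sqrt 3 / 2 + Real.cos (θ / 2) / (2 * Real.sin (θ / 2)) - 2 * Real.cos (θ / 2)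

/-!
With `s = sin (θ / 2)`, the derivative of `g` is `s - 1 / (4 * s ^ 2) = (s ^ 3 - 1 / 4) / s ^ 2`, so
its sign is that of `s ^ 3 - 1 / 4`. On `(0, 2 * π)` the sine `s` is symmetric about `θ = π` and
increasing before it, so `s ^ 3` crosses `1 / 4` upwards at `θ*` and stays above until `2 * π - θ*`.
-/

/-- The angle `θ*` in `(0, π / 2)` at which `g` is stationary, i.e. `sin (θ* / 2) ^ 3 = 1 / 4`. -/
noncomputable def criticalAngle : ℝ :=
  2 * arcsin ((1 / 4 : ℝ) ^ ((1 : ℝ) / 3))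

theorem sin_lt_sin_of_lt_of_lt_pi_sub {x y : ℝ} (hx : -(π / 2) ≤ x) (hxy : x < y)
    (hy : y < π - x) : sin x < sin y := by
  rcases le_total y (π / 2) with hle | hge
  · exact sin_lt_sin_of_lt_of_le_pi_div_two hx hle hxy
  · rw [← sin_pi_sub y]
    exact sin_lt_sin_of_lt_of_le_pi_div_two hx (by linarith) (by linarith)

theorem sin_half_pos {θ : ℝ} (hθ : θ ∈ Set.Ioo 0 (2 * π)) : 0 < sin (θ / 2) :=
  sin_pos_of_pos_of_lt_pi (by linarith [hθ.1]) (by linarith [hθ.2])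

theorem sub_one_div_four_mul_sq {K : Type*} [Field K] {s : K} (hs : s ≠ 0) :
    s - 1 / (4 * s ^ 2) = (s ^ 3 - 1 / 4) / s ^ 2 := by
  rw [sub_div, pow_succ' s 2, mul_div_cancel_right₀ s (pow_ne_zero 2 hs), div_div]

theorem sub_one_div_four_mul_sq_eq_zero_iff {K : Type*} [Field K] {s : K} (hs : s ≠ 0) :
    s - 1 / (4 * s ^ 2) = 0 ↔ s ^ 3 = 1 / 4 := by
  rw [sub_one_div_four_mul_sq hs, div_eq_zero_iff, or_iff_left (pow_ne_zero 2 hs), sub_eq_zero]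

theorem hasDerivAt_g {θ : ℝ} (hθ : sin (θ / 2) ≠ 0) :
    HasDerivAt g (sin (θ / 2) - 1 / (4 * sin (θ / 2) ^ 2)) θ := by
  have hhalf : HasDerivAt (fun x : ℝ => x / 2) (1 / 2) θ := (hasDerivAt_id θ).div_const 2
  have hcot := hhalf.cos.div (hhalf.sin.const_mul 2) (mul_ne_zero two_ne_zero hθ)
  refine ((hcot.const_add (√3 / 2)).sub (hhalf.cos.const_mul 2)).congr_deriv ?_
  field_simp
  linear_combination (-4) * sin_sq_add_cos_sq (θ / 2)

theorem continuousOn_g : ContinuousOn g {θ | sin (θ / 2) ≠ 0} :=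
  fun _ hθ => (hasDerivAt_g hθ).continuousAt.continuousWithinAt

theorem deriv_g {θ : ℝ} (hθ : sin (θ / 2) ≠ 0) :
    deriv g θ = (sin (θ / 2) ^ 3 - 1 / 4) / sin (θ / 2) ^ 2 :=
  (hasDerivAt_g hθ).deriv.trans (sub_one_div_four_mul_sq hθ)

theorem deriv_g_neg {θ : ℝ} (hθ : sin (θ / 2) ≠ 0) (hlt : sin (θ / 2) ^ 3 < 1 / 4) :
    deriv g θ < 0 := by
  rw [deriv_g hθ]
  exact div_neg_of_neg_of_pos (sub_neg.2 hlt) (by positivity)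

theorem deriv_g_pos {θ : ℝ} (hlt : 1 / 4 < sin (θ / 2) ^ 3) : 0 < deriv g θ := by
  have hθ : sin (θ / 2) ≠ 0 := by
    intro h
    norm_num [h] at hlt
  rw [deriv_g hθ]
  exact div_pos (sub_pos.2 hlt) (by positivity)

theorem one_fourth_rpow_one_third_pow_three : ((1 / 4 : ℝ) ^ ((1 : ℝ) / 3)) ^ 3 = 1 / 4 := by
  simpa only [one_div, Nat.cast_ofNat] using
    rpow_inv_natCast_pow (x := 1 / 4) (n := 3) (by norm_num) three_ne_zero

theorem one_fourth_rpow_one_third_lt_sin_pi_div_four :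
    (1 / 4 : ℝ) ^ ((1 : ℝ) / 3) < sin (π / 4) := by
  have hsin : 0 < sin (π / 4) := sin_pos_of_pos_of_lt_pi (by positivity) (by linarith [pi_pos])
  refine lt_of_pow_lt_pow_left₀ 3 hsin.le ?_
  have hsqrt : 1 < √2 := one_lt_sqrt_two
  calc ((1 / 4 : ℝ) ^ ((1 : ℝ) / 3)) ^ 3 = 1 / 4 := one_fourth_rpow_one_third_pow_three
    _ < √2 / 4 := by linarith
    _ = sin (π / 4) ^ 3 := by
      rw [sin_pi_div_four]
      linear_combination (-√2 / 8) * sq_sqrt (zero_le_two : (0 : ℝ) ≤ 2)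

theorem criticalAngle_mem_Ioo : criticalAngle ∈ Set.Ioo 0 (π / 2) := by
  have hpos : 0 < arcsin ((1 / 4 : ℝ) ^ ((1 : ℝ) / 3)) := arcsin_pos.2 (by positivity)
  have hlt : arcsin ((1 / 4 : ℝ) ^ ((1 : ℝ) / 3)) < π / 4 :=
    (arcsin_lt_iff_lt_sin' ⟨by linarith [pi_pos], by linarith [pi_pos]⟩).2
      one_fourth_rpow_one_third_lt_sin_pi_div_four
  rw [criticalAngle]
  constructor <;> linarith

theorem sin_criticalAngle_div_two_pow_three : sin (criticalAngle / 2) ^ 3 = 1 / 4 := by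
  have hnonneg : 0 ≤ (1 / 4 : ℝ) ^ ((1 : ℝ) / 3) := by positivity
  have hle_one : (1 / 4 : ℝ) ^ ((1 : ℝ) / 3) ≤ 1 :=
    rpow_le_one (by norm_num) (by norm_num) (by norm_num)
  rw [criticalAngle, mul_div_cancel_left₀ _ two_ne_zero, sin_arcsin (by linarith) hle_one,
    one_fourth_rpow_one_third_pow_three]

theorem sin_half_pow_three_lt_one_fourth {θ : ℝ} (hθ : θ ∈ Set.Ioo 0 criticalAngle) :
    sin (θ / 2) ^ 3 < 1 / 4 := by
  have ⟨_, hcrit⟩ := criticalAngle_mem_Ioo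
  have hsin : sin (θ / 2) < sin (criticalAngle / 2) :=
    sin_lt_sin_of_lt_of_lt_pi_sub (by linarith [hθ.1]) (by linarith [hθ.2]) (by linarith [hθ.2])
  calc sin (θ / 2) ^ 3 < sin (criticalAngle / 2) ^ 3 :=
        pow_lt_pow_left₀ hsin (sin_half_pos ⟨hθ.1, by linarith [hθ.2]⟩).le three_ne_zero
    _ = 1 / 4 := sin_criticalAngle_div_two_pow_three

theorem one_fourth_lt_sin_half_pow_three {θ : ℝ}
    (hθ : θ ∈ Set.Ioo criticalAngle (2 * π - criticalAngle)) : 1 / 4 < sin (θ / 2) ^ 3 := by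
  have ⟨hpos, hcrit⟩ := criticalAngle_mem_Ioo
  have hsin : sin (criticalAngle / 2) < sin (θ / 2) :=
    sin_lt_sin_of_lt_of_lt_pi_sub (by linarith) (by linarith [hθ.1]) (by linarith [hθ.2])
  calc 1 / 4 = sin (criticalAngle / 2) ^ 3 := sin_criticalAngle_div_two_pow_three.symm
    _ < sin (θ / 2) ^ 3 :=
        pow_lt_pow_left₀ hsin (sin_half_pos ⟨hpos, by linarith⟩).le three_ne_zero

theorem strictAntiOn_g : StrictAntiOn g (Set.Ioc 0 criticalAngle) := by
  have hsin : ∀ θ ∈ Set.Ioc 0 criticalAngle, sin (θ / 2) ≠ 0 := fun θ hθ =>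
    (sin_half_pos ⟨hθ.1, by linarith [hθ.2, criticalAngle_mem_Ioo.2, pi_pos]⟩).ne'
  refine strictAntiOn_of_deriv_neg (convex_Ioc _ _) (continuousOn_g.mono hsin) fun θ hθ => ?_
  rw [interior_Ioc] at hθ
  exact deriv_g_neg (hsin θ (Set.Ioo_subset_Ioc_self hθ)) (sin_half_pow_three_lt_one_fourth hθ)

theorem strictMonoOn_g : StrictMonoOn g (Set.Icc criticalAngle (2 * π - criticalAngle)) := by
  have hsin : ∀ θ ∈ Set.Icc criticalAngle (2 * π - criticalAngle), sin (θ / 2) ≠ 0 := fun θ hθ =>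
    (sin_half_pos ⟨criticalAngle_mem_Ioo.1.trans_le hθ.1,
      by linarith [hθ.2, criticalAngle_mem_Ioo.1]⟩).ne'
  refine strictMonoOn_of_deriv_pos (convex_Icc _ _) (continuousOn_g.mono hsin) fun θ hθ => ?_
  rw [interior_Icc] at hθ
  exact deriv_g_pos (one_fourth_lt_sin_half_pow_three hθ)

theorem isMinOn_g : IsMinOn g (Set.Ioc 0 (2 * π - criticalAngle)) criticalAngle :=
  isMinOn_Ioc_of_anti_mono strictAntiOn_g.antitoneOn strictMonoOn_g.monotoneOn

theorem stmt_15_general (θstar : ℝ)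
    (hθstar : θstar = 2 * arcsin ((1 / 4 : ℝ) ^ ((1 : ℝ) / 3))) :
    (∀ θ, sin (θ / 2) ≠ 0 → HasDerivAt g (sin (θ / 2) - 1 / (4 * sin (θ / 2) ^ 2)) θ) ∧
    (∀ θ, sin (θ / 2) ≠ 0 →
      (sin (θ / 2) - 1 / (4 * sin (θ / 2) ^ 2) = 0 ↔ sin (θ / 2) ^ 3 = 1 / 4)) ∧
    θstar ∈ Set.Ioo 0 (π / 2) ∧
    StrictAntiOn g (Set.Ioc 0 θstar) ∧
    StrictMonoOn g (Set.Icc θstar (2 * π - θstar)) ∧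
    (∀ θ ∈ Set.Ioc 0 (2 * π - θstar), g θstar ≤ g θ) := by
  obtain rfl : θstar = criticalAngle := hθstar
  exact ⟨fun _ => hasDerivAt_g, fun _ => sub_one_div_four_mul_sq_eq_zero_iff,
    criticalAngle_mem_Ioo, strictAntiOn_g, strictMonoOn_g, isMinOn_iff.1 isMinOn_g⟩

theorem stmt_15 (θstar : ℝ)
    (hθstar : θstar = 2 * Real.arcsin ((1 / 4 : ℝ) ^ ((1 : ℝ) / 3))) :
    (∀ θ ∈ Set.Ioo 0 (π / 2),
      HasDerivAt g (Real.sin (θ / 2) - 1 / (4 * Real.sin (θ / 2) ^ 2)) θ) ∧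
    (∀ θ ∈ Set.Ioo 0 (π / 2),
      (Real.sin (θ / 2) - 1 / (4 * Real.sin (θ / 2) ^ 2) = 0 ↔
        Real.sin (θ / 2) ^ 3 = 1 / 4)) ∧
    θstar ∈ Set.Ioo 0 (π / 2) ∧
    StrictAntiOn g (Set.Ioc 0 θstar) ∧
    StrictMonoOn g (Set.Ico θstar (π / 2)) ∧
    (∀ θ ∈ Set.Ioo 0 (π / 2), g θstar ≤ g θ) := by
  obtain ⟨hderiv, hzero, hmem, hanti, hmono, hmin⟩ := stmt_15_general θstar hθstar
  have hsin : ∀ θ ∈ Set.Ioo 0 (π / 2), sin (θ / 2) ≠ 0 := fun θ hθ =>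
    (sin_half_pos ⟨hθ.1, by linarith [hθ.1, hθ.2]⟩).ne'
  have hle : π / 2 ≤ 2 * π - θstar := by linarith [hmem.2, pi_pos]
  exact ⟨fun θ hθ => hderiv θ (hsin θ hθ), fun θ hθ => hzero θ (hsin θ hθ), hmem, hanti,
    hmono.mono fun θ hθ => ⟨hθ.1, hθ.2.le.trans hle⟩,
    fun θ hθ => hmin θ ⟨hθ.1, hθ.2.le.trans hle⟩⟩
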